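/- arXiv:2310.12307 — 4 statements merged into one kernel-verified Lean document; each statement's English description precedes it below -/
import Mathlib

section
/- Let F be a field of characteristic ≠ 2, let n, d, k be natural numbers with k ≤ n, and let σ be the linear automorphism of F^n that negates the first k standard coordinates and fixes the remaining n−k coordinates. Then the eigenspace of the induced map ⋀^d σ on the d-th exterior power ⋀^d F^n for the eigenvalue 1 has dimension Σ_{j even, 0 ≤ j ≤ d} C(k, j)·C(n−k, d−j), and the eigenspace for the eigenvalue −1 has dimension Σ_{j odd, 0 ≤ j ≤ d} C(k, j)·C(n−k, d−j), where C denotes the binomial coefficient. -/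
/-!
The wedges `e_s` of standard basis vectors, with `s` ranging over the `d`-element subsets of
`Fin n`, form a basis of `⋀^d F^n` that diagonalizes `⋀^d σ`: the vector `e_s` has eigenvalue
`(-1) ^ j`, where `j` is the number of elements of `s` below `k`. An eigenspace of an operator
which is diagonal in some basis is spanned by the basis vectors having that eigenvalue
(`finrank_eigenspace_of_diagonal`), and since `1 ≠ -1` in `F` the two eigenspaces correspond to
`j` even and `j` odd. The subsets with a given `j` are counted by choosing the parts below `k`
and not below `k` independently (`card_powersetCard_filter_eq`).
-/

/-- The linear map induced on the `d`-th exterior power `⋀[R]^d M` by a linear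
endomorphism `f` of `M`, acting on decomposables by `v₁ ∧ ⋯ ∧ v_d ↦ f v₁ ∧ ⋯ ∧ f v_d`. -/
noncomputable def extPowMap {R M : Type*} [CommRing R] [AddCommGroup M] [Module R M]
    (d : ℕ) (f : M →ₗ[R] M) : ⋀[R]^d M →ₗ[R] ⋀[R]^d M :=
  (ExteriorAlgebra.map f).toLinearMap.restrict fun x hx => by
    rw [← ExteriorAlgebra.ιMulti_span_fixedDegree] at hx ⊢
    induction hx using Submodule.span_induction with
    | mem y hy =>
        obtain ⟨m, rfl⟩ := hy
        rw [AlgHom.toLinearMap_apply, ExteriorAlgebra.map_apply_ιMulti]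
        exact Submodule.subset_span (Set.mem_range_self _)
    | zero => simp
    | add y z _ _ hy hz => rw [map_add]; exact add_mem hy hz
    | smul a y _ hy => rw [map_smul]; exact Submodule.smul_mem _ _ hy

/-- The linear automorphism of `F^n` negating the first `k` standard coordinates and
fixing the remaining ones. -/
def negFirst (F : Type*) [Field F] (n k : ℕ) : (Fin n → F) →ₗ[F] (Fin n → F) :=
  LinearMap.pi fun i => if (i : ℕ) < k then -(LinearMap.proj i) else LinearMap.proj i

/-- An eigenspace of an operator that is diagonal in the basis `b` is spanned by the basis
vectors with that eigenvalue. -/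
lemma finrank_eigenspace_of_diagonal {K V I : Type*} [Field K] [AddCommGroup V] [Module K V]
    [Fintype I] [DecidableEq K] (b : Module.Basis I K V) (f : V →ₗ[K] V) (c : I → K)
    (hf : ∀ i, f (b i) = c i • b i) (μ : K) :
    Module.finrank K ↥(Module.End.eigenspace f μ) =
      (Finset.univ.filter fun i => c i = μ).card := by
  have hrepr : ∀ x i, b.repr (f x) i = c i * b.repr x i := by
    intro x i
    have h : b.coord i ∘ₗ f = c i • b.coord i := by
      refine b.ext fun j => ?_
      rcases eq_or_ne j i with rfl | hij
      · simp [hf]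
      · simp [hf, Finsupp.single_eq_of_ne hij.symm]
    simpa using LinearMap.congr_fun h x
  have hspan : Module.End.eigenspace f μ =
      Submodule.span K (Set.range fun i : {i // c i = μ} => b i) := by
    ext x
    have himage : (Set.range fun i : {i // c i = μ} => b i) = b '' {i | c i = μ} := by
      ext y; simp
    rw [himage, Module.Basis.mem_span_image, Module.End.mem_eigenspace_iff]
    constructor
    · intro hx i hi
      have h := hrepr x i
      rw [hx, map_smul, Finsupp.smul_apply, smul_eq_mul] at h
      exact (mul_right_cancel₀ (Finsupp.mem_support_iff.mp hi) h).symm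
    · intro hx
      refine b.ext_elem fun i => ?_
      rw [hrepr, map_smul, Finsupp.smul_apply, smul_eq_mul]
      by_cases hi : b.repr x i = 0
      · simp [hi]
      · rw [show c i = μ from hx (Finsupp.mem_support_iff.mpr hi)]
  have hli : LinearIndependent K fun i : {i // c i = μ} => b i :=
    b.linearIndependent.comp _ Subtype.val_injective
  rw [hspan, finrank_span_eq_card hli,
    Fintype.card_subtype]

lemma card_powersetCard_filter_eq {α : Type*} [Fintype α] [DecidableEq α] (p : α → Prop)
    [DecidablePred p] {d j : ℕ} (hj : j ≤ d) :
    (((Finset.univ : Finset α).powersetCard d).filter fun s => (s.filter p).card = j).card =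
      (Finset.univ.filter p).card.choose j *
        (Finset.univ.filter fun a => ¬ p a).card.choose (d - j) := by
  rw [← Finset.card_powersetCard, ← Finset.card_powersetCard, ← Finset.card_product]
  refine Finset.card_nbij' (fun s => (s.filter p, s.filter fun a => ¬ p a))
    (fun t => t.1 ∪ t.2) ?_ ?_ ?_ ?_
  · intro s hs
    simp only [Finset.mem_coe, Finset.mem_filter, Finset.mem_powersetCard,
      Finset.mem_product] at hs ⊢
    have h := Finset.card_filter_add_card_filter_not (s := s) p
    refine ⟨⟨Finset.filter_subset_filter _ hs.1.1, hs.2⟩,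
      Finset.filter_subset_filter _ hs.1.1, by omega⟩
  · rintro ⟨t, u⟩ h
    simp only [Finset.mem_coe, Finset.mem_filter, Finset.mem_powersetCard,
      Finset.mem_product] at h ⊢
    obtain ⟨⟨ht, htc⟩, hu, huc⟩ := h
    have ht' : ∀ a ∈ t, p a := fun a ha => (Finset.mem_filter.mp (ht ha)).2
    have hu' : ∀ a ∈ u, ¬ p a := fun a ha => (Finset.mem_filter.mp (hu ha)).2
    have hdisj : Disjoint t u :=
      Finset.disjoint_left.mpr fun a ha hb => hu' a hb (ht' a ha)
    refine ⟨⟨Finset.subset_univ _, ?_⟩, ?_⟩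
    · rw [Finset.card_union_of_disjoint hdisj]; omega
    · rw [Finset.filter_union, Finset.filter_true_of_mem ht', Finset.filter_false_of_mem hu',
        Finset.union_empty, htc]
  · intro s _
    exact Finset.filter_union_filter_not_eq p s
  · rintro ⟨t, u⟩ h
    simp only [Finset.mem_coe, Finset.mem_powersetCard, Finset.mem_product] at h
    obtain ⟨⟨ht, -⟩, hu, -⟩ := h
    have ht' : ∀ a ∈ t, p a := fun a ha => (Finset.mem_filter.mp (ht ha)).2
    have hu' : ∀ a ∈ u, ¬ p a := fun a ha => (Finset.mem_filter.mp (hu ha)).2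
    ext a <;> simp only [Finset.mem_filter, Finset.mem_union]
    · exact ⟨fun h => h.1.resolve_right fun hb => hu' a hb h.2, fun h => ⟨.inl h, ht' a h⟩⟩
    · exact ⟨fun h => h.1.resolve_left fun hb => h.2 (ht' a hb), fun h => ⟨.inr h, hu' a h⟩⟩

lemma card_powersetCard_filter (n d k : ℕ) (hk : k ≤ n) (P : ℕ → Prop) [DecidablePred P] :
    (Finset.univ.filter fun s : Set.powersetCard (Fin n) d =>
        P ((s : Finset (Fin n)).filter fun i : Fin n => (i : ℕ) < k).card).card =
      ∑ j ∈ Finset.range (d + 1),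
        if P j then Nat.choose k j * Nat.choose (n - k) (d - j) else 0 := by
  have hlt : (Finset.univ.filter fun i : Fin n => (i : ℕ) < k).card = k := by
    rw [Fin.card_filter_val_lt]; omega
  have hge : (Finset.univ.filter fun i : Fin n => ¬ (i : ℕ) < k).card = n - k := by
    have h := Finset.card_filter_add_card_filter_not
      (s := (Finset.univ : Finset (Fin n))) fun i => (i : ℕ) < k
    rw [hlt, Finset.card_univ, Fintype.card_fin] at h
    omega
  have hval : (Finset.univ.filter fun s : Set.powersetCard (Fin n) d =>
        P ((s : Finset (Fin n)).filter fun i : Fin n => (i : ℕ) < k).card).card =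
      (((Finset.univ : Finset (Fin n)).powersetCard d).filter fun s =>
        P (s.filter fun i : Fin n => (i : ℕ) < k).card).card := by
    refine Finset.card_bij (fun s _ => (s : Finset (Fin n))) ?_ ?_ ?_
    · intro s hs
      simpa [Finset.mem_powersetCard] using hs
    · intro s _ t _ h
      exact Subtype.ext h
    · intro s hs
      simp only [Finset.mem_filter, Finset.mem_powersetCard] at hs
      exact ⟨⟨s, hs.1.2⟩, by simpa using hs.2, rfl⟩
  rw [hval, Finset.card_eq_sum_card_fiberwise
    (f := fun s : Finset (Fin n) => (s.filter fun i : Fin n => (i : ℕ) < k).card)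
    (t := Finset.range (d + 1))]
  · refine Finset.sum_congr rfl fun j hj => ?_
    have hjd : j ≤ d := by simpa [Nat.lt_succ_iff] using hj
    split_ifs with hP
    · have h := card_powersetCard_filter_eq (fun i : Fin n => (i : ℕ) < k) hjd
      rw [hlt, hge] at h
      rw [← h, Finset.filter_filter]
      congr 1
      refine Finset.filter_congr fun s _ => ?_
      exact ⟨fun h => h.2, fun h => ⟨h ▸ hP, h⟩⟩
    · rw [Finset.card_eq_zero, Finset.filter_eq_empty_iff]
      intro s hs h
      exact hP (h ▸ (Finset.mem_filter.mp hs).2)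
  · intro s hs
    have hs' := (Finset.mem_powersetCard.mp (Finset.mem_filter.mp hs).1).2
    have := Finset.card_filter_le s fun i : Fin n => (i : ℕ) < k
    simp only [Finset.coe_range, Set.mem_Iio]
    omega

lemma negFirst_basisFun (F : Type*) [Field F] (n k : ℕ) (i : Fin n) :
    negFirst F n k (Pi.basisFun F (Fin n) i) =
      (if (i : ℕ) < k then (-1 : F) else 1) • Pi.basisFun F (Fin n) i := by
  ext j
  rcases eq_or_ne j i with rfl | hij
  · by_cases h : (j : ℕ) < k <;> simp [negFirst, h]
  · by_cases h : (j : ℕ) < k <;> simp [negFirst, h, hij]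

/-- The wedge `e_s` is an eigenvector of `⋀^d σ` with eigenvalue `(-1) ^ #{i ∈ s | i < k}`. -/
lemma extPowMap_negFirst_basis (F : Type*) [Field F] (n d k : ℕ)
    (s : Set.powersetCard (Fin n) d) :
    extPowMap d (negFirst F n k) ((Pi.basisFun F (Fin n)).exteriorPower d s) =
      ((-1 : F) ^ ((s : Finset (Fin n)).filter fun i : Fin n => (i : ℕ) < k).card) •
        (Pi.basisFun F (Fin n)).exteriorPower d s := by
  have hprod : ∏ i : Fin d, (if (Set.powersetCard.ofFinEmbEquiv.symm s i : ℕ) < k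
      then (-1 : F) else 1) =
      (-1 : F) ^ ((s : Finset (Fin n)).filter fun i : Fin n => (i : ℕ) < k).card := by
    have himage : (Finset.univ : Finset (Fin d)).map
        (Set.powersetCard.ofFinEmbEquiv.symm s).toEmbedding = (s : Finset (Fin n)) := by
      ext a
      have h := Set.powersetCard.mem_range_ofFinEmbEquiv_symm_iff_mem s a
      rw [← Set.powersetCard.mem_coe_iff] at h
      simpa using h
    rw [← Finset.prod_const, Finset.prod_filter, ← himage, Finset.prod_map]
    rfl
  rw [exteriorPower.basis_apply, ← hprod]
  apply Subtype.ext
  simp only [extPowMap, LinearMap.coe_restrict_apply, AlgHom.toLinearMap_apply,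
    exteriorPower.ιMulti_family, exteriorPower.ιMulti_apply_coe, Submodule.coe_smul,
    ExteriorAlgebra.map_apply_ιMulti]
  rw [← AlternatingMap.map_smul_univ]
  congr 1
  ext1 i
  exact negFirst_basisFun F n k _

/-- The eigenspace of `⋀^d σ` on `⋀^d F^n` for the eigenvalue `1` (resp. `-1`), where `σ`
negates the first `k` standard coordinates, has dimension
`∑_{j even} C(k,j)·C(n−k,d−j)` (resp. `∑_{j odd} C(k,j)·C(n−k,d−j)`). -/
theorem exterior_power_involution_eigenspace_dims
    (F : Type*) [Field F] (hF : ringChar F ≠ 2) (n d k : ℕ) (hk : k ≤ n) :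
    (Module.finrank F
        ↥(Module.End.eigenspace (extPowMap d (negFirst F n k)) 1) =
      ∑ j ∈ Finset.range (d + 1),
        if Even j then Nat.choose k j * Nat.choose (n - k) (d - j) else 0) ∧
    (Module.finrank F
        ↥(Module.End.eigenspace (extPowMap d (negFirst F n k)) (-1)) =
      ∑ j ∈ Finset.range (d + 1),
        if Odd j then Nat.choose k j * Nat.choose (n - k) (d - j) else 0) := by
  classical
  have hne : (-1 : F) ≠ 1 := Ring.neg_one_ne_one_of_char_ne_two hF
  have hdiag := finrank_eigenspace_of_diagonal _ _ _ (extPowMap_negFirst_basis F n d k)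
  constructor
  · rw [hdiag, ← card_powersetCard_filter n d k hk]
    congr 1
    refine Finset.filter_congr fun s _ => ⟨fun h => ?_, fun h => h.neg_one_pow⟩
    by_contra hodd
    rw [(Nat.not_even_iff_odd.mp hodd).neg_one_pow] at h
    exact hne h
  · rw [hdiag, ← card_powersetCard_filter n d k hk]
    congr 1
    refine Finset.filter_congr fun s _ => ⟨fun h => ?_, fun h => h.neg_one_pow⟩
    by_contra heven
    rw [(Nat.not_odd_iff_even.mp heven).neg_one_pow] at h
    exact hne h.symm
end

section
/- Let g be an element of the special unitary group SU(3) such that g² is a scalar matrix but g itself is not a scalar matrix. Then the fixed subspace of the induced action of g on the space of homogeneous polynomials of degree 3 in ℂ[X₀, X₁, X₂] (acting by linear substitution of variables) has complex dimension 4; in particular its complex codimension is 6. -/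
/-!
Write `g² = c`. Taking determinants gives `c³ = 1`, so `h = c g` satisfies `h² = 1` and `det h = 1`,
and it is again unitary, hence Hermitian. It is therefore unitarily diagonalizable with eigenvalues
`εᵢ = ±1` of product `1`, not all `1` because `g` is not scalar, and `g⁻¹ = c h`
(`exists_diagonalization`). A change of variables does not alter the dimension of the space of
fixed cubic forms (`finrank_fixedCubics_conj`), so `g⁻¹` may be replaced by `diag(c εᵢ)`, which
scales a cubic monomial `X^d` by `c³ ∏ εᵢ ^ dᵢ = ∏ εᵢ ^ dᵢ`. The fixed space is thus spanned by
the monomials for which this sign is `1`, and up to order `ε = (1, -1, -1)`, which leaves `4` of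
the `10` cubic monomials (`finrank_fixedCubics_signs`, `finrank_cubics`).
-/

open MvPolynomial in
/-- The action of a matrix `g` on polynomials by linear substitution of variables,
`p ↦ p ∘ g⁻¹` : the variable `Xᵢ` is replaced by `∑ⱼ (g⁻¹)ᵢⱼ Xⱼ`. -/
noncomputable def polySubstAction (g : Matrix (Fin 3) (Fin 3) ℂ) :
    MvPolynomial (Fin 3) ℂ →ₐ[ℂ] MvPolynomial (Fin 3) ℂ :=
  aeval fun i => ∑ j, g⁻¹ i j • (X j : MvPolynomial (Fin 3) ℂ)

/-- The substitution `Xᵢ ↦ ∑ⱼ Aᵢⱼ Xⱼ`, so that `polySubstAction g` is `linSubst g⁻¹`. -/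
noncomputable def linSubst (A : Matrix (Fin 3) (Fin 3) ℂ) :
    MvPolynomial (Fin 3) ℂ →ₐ[ℂ] MvPolynomial (Fin 3) ℂ :=
  MvPolynomial.aeval fun i => ∑ j, A i j • (MvPolynomial.X j : MvPolynomial (Fin 3) ℂ)

/-- The cubic forms fixed by `linSubst A`. -/
noncomputable def fixedCubics (A : Matrix (Fin 3) (Fin 3) ℂ) :
    Submodule ℂ (MvPolynomial (Fin 3) ℂ) :=
  MvPolynomial.homogeneousSubmodule (Fin 3) ℂ 3 ⊓
    Module.End.eigenspace (linSubst A).toLinearMap 1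

section Substitution

open MvPolynomial

lemma mem_fixedCubics {A : Matrix (Fin 3) (Fin 3) ℂ} {p : MvPolynomial (Fin 3) ℂ} :
    p ∈ fixedCubics A ↔ p.IsHomogeneous 3 ∧ linSubst A p = p := by
  simp [fixedCubics]

/-- Substitution is contravariant in the matrix. -/
lemma linSubst_linSubst (A B : Matrix (Fin 3) (Fin 3) ℂ) (p : MvPolynomial (Fin 3) ℂ) :
    linSubst A (linSubst B p) = linSubst (B * A) p := by
  rw [← AlgHom.comp_apply]
  congr 1
  ext1 i
  simp only [linSubst, AlgHom.comp_apply, aeval_X, map_sum, map_smul, Matrix.mul_apply,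
    Finset.smul_sum, Finset.sum_smul, smul_smul]
  exact Finset.sum_comm

lemma linSubst_one (p : MvPolynomial (Fin 3) ℂ) : linSubst 1 p = p := by
  have : linSubst 1 = AlgHom.id ℂ _ := by
    ext1 i
    simp [linSubst, Matrix.one_apply]
  rw [this, AlgHom.id_apply]

lemma linSubst_isHomogeneous (A : Matrix (Fin 3) (Fin 3) ℂ) {p : MvPolynomial (Fin 3) ℂ}
    (hp : p.IsHomogeneous 3) : (linSubst A p).IsHomogeneous 3 := by
  have := hp.aeval (fun i => ∑ j, A i j • (X j : MvPolynomial (Fin 3) ℂ)) (n := 1) fun i =>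
    (homogeneousSubmodule (Fin 3) ℂ 1).sum_mem fun j _ =>
      (homogeneousSubmodule (Fin 3) ℂ 1).smul_mem _ (isHomogeneous_X ℂ j)
  simpa [linSubst] using this

lemma linSubst_mem_fixedCubics {A D U : Matrix (Fin 3) (Fin 3) ℂ} (h : A * U = U * D)
    {p : MvPolynomial (Fin 3) ℂ} (hp : p ∈ fixedCubics A) : linSubst U p ∈ fixedCubics D := by
  rw [mem_fixedCubics] at hp ⊢
  refine ⟨linSubst_isHomogeneous U hp.1, ?_⟩
  rw [linSubst_linSubst, ← h, ← linSubst_linSubst, hp.2]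

/-- Conjugate matrices have fixed spaces of the same dimension. -/
lemma finrank_fixedCubics_conj {A D U V : Matrix (Fin 3) (Fin 3) ℂ} (hUV : U * V = 1)
    (hVU : V * U = 1) (h : A * U = U * D) :
    Module.finrank ℂ (fixedCubics A) = Module.finrank ℂ (fixedCubics D) := by
  have h' : D * V = V * A := by
    calc D * V = V * U * D * V := by rw [hVU, one_mul]
      _ = V * (U * D) * V := by simp only [mul_assoc]
      _ = V * A * (U * V) := by rw [← h]; simp only [mul_assoc]
      _ = V * A := by rw [hUV, mul_one]
  refine LinearEquiv.finrank_eq (LinearEquiv.ofLinearMap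
    ((linSubst U).toLinearMap.restrict fun p hp => linSubst_mem_fixedCubics h hp)
    ((linSubst V).toLinearMap.restrict fun p hp => linSubst_mem_fixedCubics h' hp) ?_ ?_)
  · ext1 p
    apply Subtype.ext
    change linSubst U (linSubst V p) = p
    rw [linSubst_linSubst, hVU, linSubst_one]
  · ext1 p
    apply Subtype.ext
    change linSubst V (linSubst U p) = p
    rw [linSubst_linSubst, hUV, linSubst_one]

/-- A diagonal substitution scales the monomial `X^d` by `∏ aᵢ ^ dᵢ`. -/
lemma coeff_linSubst_diagonal (a : Fin 3 → ℂ) (p : MvPolynomial (Fin 3) ℂ) (d : Fin 3 →₀ ℕ) :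
    coeff d (linSubst (Matrix.diagonal a) p) = (∏ i, a i ^ d i) * coeff d p := by
  induction p using MvPolynomial.induction_on' with
  | monomial e r =>
    have : linSubst (Matrix.diagonal a) (monomial e r) = monomial e ((∏ i, a i ^ e i) * r) := by
      simp only [linSubst, Matrix.diagonal_apply, ite_smul, zero_smul, Finset.sum_ite_eq,
        Finset.mem_univ, if_true, aeval_monomial, algebraMap_eq]
      rw [monomial_eq, Finsupp.prod_fintype _ _ (fun _ => pow_zero _),
        Finsupp.prod_fintype _ _ (fun _ => pow_zero _)]
      simp only [smul_eq_C_mul, mul_pow, Finset.prod_mul_distrib, map_mul, map_prod, map_pow]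
      ring
    rw [this, coeff_monomial, coeff_monomial]
    split_ifs with hd
    · rw [hd]
    · rw [mul_zero]
  | add p q hp hq => rw [map_add, coeff_add, coeff_add, hp, hq, mul_add]

lemma fixedCubics_diagonal (a : Fin 3 → ℂ) :
    fixedCubics (Matrix.diagonal a) =
      restrictSupport ℂ {d | ∑ i, d i = 3 ∧ ∏ i, a i ^ d i = 1} := by
  ext p
  rw [mem_fixedCubics, mem_restrictSupport_iff]
  have hdeg : p.IsHomogeneous 3 ↔ ∀ d, coeff d p ≠ 0 → ∑ i, d i = 3 := by
    refine forall_congr' fun d => ?_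
    rw [← Finsupp.degree_eq_sum, Finsupp.degree_eq_weight_one]
    rfl
  have hfix : linSubst (Matrix.diagonal a) p = p ↔ ∀ d, coeff d p ≠ 0 → ∏ i, a i ^ d i = 1 := by
    rw [MvPolynomial.ext_iff]
    refine forall_congr' fun d => ?_
    rw [coeff_linSubst_diagonal, mul_left_eq_self₀, or_iff_not_imp_right]
  rw [hdeg, hfix, ← forall_and]
  simp only [Set.subset_def, Finset.mem_coe, mem_support_iff, Set.mem_ofPred_eq]
  exact forall_congr' fun d => by tauto

/-- The dimension of the span of the degree-`3` monomials whose exponent satisfies `P`, as a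
computable count. -/
lemma finrank_restrictSupport (P : (Fin 3 → ℕ) → Prop) [DecidablePred P] :
    Module.finrank ℂ (restrictSupport ℂ {d : Fin 3 →₀ ℕ | ∑ i, d i = 3 ∧ P d}) =
      ((Finset.univ.piAntidiag 3).filter P).card := by
  rw [Module.finrank_eq_nat_card_basis (basisRestrictSupport ℂ _),
    ← Nat.card_eq_finsetCard]
  refine Nat.card_congr (Finsupp.equivFunOnFinite.subtypeEquiv fun d => ?_)
  simp only [Set.mem_ofPred_eq, Finset.mem_filter, Finset.mem_piAntidiag, Finset.mem_univ,
    implies_true, and_true]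
  rfl

lemma finrank_cubics :
    Module.finrank ℂ (homogeneousSubmodule (Fin 3) ℂ 3) = 10 := by
  have h : homogeneousSubmodule (Fin 3) ℂ 3 = fixedCubics 1 := by
    ext p
    rw [mem_fixedCubics, mem_homogeneousSubmodule, linSubst_one]
    simp
  have hset : {d : Fin 3 →₀ ℕ | ∑ i, d i = 3 ∧ ∏ i, (1 : ℂ) ^ d i = 1} =
      {d | ∑ i, d i = 3 ∧ True} := by
    ext d
    simp
  rw [h, ← Matrix.diagonal_one, fixedCubics_diagonal, hset, finrank_restrictSupport fun _ => True]
  decide +kernel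

/-- Signs `ε`, not all `1`, with product `1` are `(1, -1, -1)` up to order; the cubic monomials they
fix are then `x³, xy², xyz, xz²`. -/
lemma card_fixed_monomials (ε : Fin 3 → ℤˣ) (h1 : ∏ i, ε i = 1) (hne : ε ≠ 1) :
    ((Finset.univ.piAntidiag 3).filter fun d : Fin 3 → ℕ => ∏ i, ε i ^ d i = 1).card = 4 := by
  revert ε
  decide +kernel

lemma finrank_fixedCubics_signs (c : ℂ) (hc : c ^ 3 = 1) (ε : Fin 3 → ℤˣ) (h1 : ∏ i, ε i = 1)
    (hne : ε ≠ 1) :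
    Module.finrank ℂ (fixedCubics (Matrix.diagonal fun i => c * ((ε i : ℤ) : ℂ))) = 4 := by
  have hset : {d : Fin 3 →₀ ℕ | ∑ i, d i = 3 ∧ ∏ i, (c * ((ε i : ℤ) : ℂ)) ^ d i = 1} =
      {d | ∑ i, d i = 3 ∧ ∏ i, ε i ^ d i = 1} := by
    ext d
    refine and_congr_right fun hd => ?_
    -- The scalar `c` contributes `c ^ 3 = 1` on a cubic monomial.
    rw [Finset.prod_congr rfl fun i _ => mul_pow c _ (d i), Finset.prod_mul_distrib,
      Finset.prod_pow_eq_pow_sum, hd, hc, one_mul, ← Units.val_inj]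
    push_cast
    norm_cast
  rw [fixedCubics_diagonal, hset,
    finrank_restrictSupport fun d : Fin 3 → ℕ => ∏ i, ε i ^ d i = 1,
    card_fixed_monomials ε h1 hne]

end Substitution

/-- If `g² = c`, then `c³ = 1` (take determinants) and `h = c g` is a Hermitian involution of determinant `1`, hence unitarily
diagonalizable with eigenvalues `±1`, and `g⁻¹ = c h`. -/
lemma exists_diagonalization
    (g : Matrix (Fin 3) (Fin 3) ℂ) (hg : g ∈ Matrix.specialUnitaryGroup (Fin 3) ℂ)
    (c : ℂ) (hsq : g ^ 2 = c • (1 : Matrix (Fin 3) (Fin 3) ℂ))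
    (hns : ¬ ∃ c : ℂ, g = c • (1 : Matrix (Fin 3) (Fin 3) ℂ)) :
    c ^ 3 = 1 ∧ ∃ (ε : Fin 3 → ℤˣ) (U V : Matrix (Fin 3) (Fin 3) ℂ),
      ∏ i, ε i = 1 ∧ ε ≠ 1 ∧ U * V = 1 ∧ V * U = 1 ∧
        g⁻¹ * U = U * Matrix.diagonal fun i => c * ((ε i : ℤ) : ℂ) := by
  obtain ⟨hu, hdet⟩ := Matrix.mem_specialUnitaryGroup_iff.1 hg
  have hc : c ^ 3 = 1 := by
    have := congrArg Matrix.det hsq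
    simpa [hdet] using this.symm
  have hc0 : c ≠ 0 := by rintro rfl; norm_num at hc
  have hinv : g⁻¹ = c • c • g := by
    apply Matrix.inv_eq_right_inv
    rw [mul_smul_comm, mul_smul_comm, ← sq, hsq, smul_smul, smul_smul,
      show c * c * c = 1 by rw [← hc]; ring, one_smul]
  have hstar : star g = c • c • g := by
    rw [← hinv]
    exact (Matrix.inv_eq_left_inv (Matrix.mem_unitaryGroup_iff'.1 hu)).symm
  have hcs : star c = c ^ 2 := by
    have hn : ‖c‖ = 1 := by
      have := congrArg norm hc
      rw [norm_pow, norm_one] at this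
      exact (pow_eq_one_iff_of_nonneg (norm_nonneg c) three_ne_zero).1 this
    have h2 : c * star c = 1 := by
      have := Complex.mul_conj c
      rw [Complex.normSq_eq_norm_sq, hn] at this
      simpa using this
    apply mul_left_cancel₀ hc0
    rw [h2, ← hc]; ring
  have hherm : (c • g).IsHermitian := by
    rw [Matrix.IsHermitian, Matrix.conjTranspose_smul, ← Matrix.star_eq_conjTranspose, hstar, hcs,
      smul_smul, smul_smul]
    congr 1
    linear_combination c * hc
  have hsq1 : (c • g) * (c • g) = 1 := by
    rw [smul_mul_smul_comm, ← sq, ← sq, hsq, smul_smul, ← pow_succ, hc, one_smul]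
  set U : Matrix (Fin 3) (Fin 3) ℂ := hherm.eigenvectorUnitary.1 with hU
  set D : Matrix (Fin 3) (Fin 3) ℂ :=
    Matrix.diagonal (RCLike.ofReal ∘ hherm.eigenvalues) with hD
  have hUV : U * star U = 1 := Unitary.coe_mul_star_self hherm.eigenvectorUnitary
  have hVU : star U * U = 1 := Unitary.coe_star_mul_self hherm.eigenvectorUnitary
  have hspec : c • g = U * D * star U := by
    have := hherm.spectral_theorem
    rwa [Unitary.conjStarAlgAut_apply] at this
  have hDD : D * D = 1 := by
    calc D * D = star U * (U * D * star U) * (U * D * star U) * U := by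
          simp only [mul_assoc, hVU, mul_one]
          simp only [← mul_assoc, hVU, one_mul]
      _ = 1 := by rw [← hspec, mul_assoc (star U), hsq1, mul_one, hVU]
  have hsign : ∀ i, ∃ e : ℤˣ, hherm.eigenvalues i = ((e : ℤ) : ℝ) := by
    intro i
    have h := congrFun (congrFun hDD i) i
    rw [hD, Matrix.diagonal_mul_diagonal, Matrix.diagonal_apply_eq, Matrix.one_apply_eq,
      Function.comp_apply] at h
    have h' : hherm.eigenvalues i * hherm.eigenvalues i = 1 :=
      Complex.ofReal_injective (by rw [Complex.ofReal_mul, Complex.ofReal_one]; exact h)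
    rcases mul_self_eq_one_iff.1 h' with h | h
    · exact ⟨1, by simp [h]⟩
    · exact ⟨-1, by simp [h]⟩
  choose ε hε using hsign
  have hDε : D = Matrix.diagonal fun i => ((ε i : ℤ) : ℂ) := by
    rw [hD]
    congr 1
    ext i
    simp [hε]
  refine ⟨hc, ε, U, star U, ?_, ?_, hUV, hVU, ?_⟩
  · have h := hherm.det_eq_prod_eigenvalues
    rw [Matrix.det_smul, hdet, Fintype.card_fin, hc, one_mul] at h
    simp only [hε] at h
    rw [← Units.val_inj]
    push_cast
    have h' : (1 : ℂ) = ((∏ i, (ε i : ℤ) : ℤ) : ℂ) := by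
      rw [h]; push_cast; rfl
    exact_mod_cast h'.symm
  · rintro rfl
    apply hns
    -- If all signs are `1`, then `c g = 1`, so `g` is scalar.
    refine ⟨c⁻¹, ?_⟩
    have : D = 1 := by rw [hDε]; simp
    rw [this, mul_one, hUV] at hspec
    rw [← hspec, smul_smul, inv_mul_cancel₀ hc0, one_smul]
  · have : (Matrix.diagonal fun i => c * ((ε i : ℤ) : ℂ)) = c • D := by
      rw [hDε, ← Matrix.diagonal_smul]
      rfl
    rw [this, hinv, hspec, smul_mul_assoc, mul_smul_comm, mul_assoc, hVU, mul_one]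

open MvPolynomial in
/-- If `g ∈ SU(3)` is such that `g²` is a scalar matrix but `g` is not scalar, then the
fixed subspace of the action of `g` (by linear substitution of variables) on the space of
homogeneous polynomials of degree `3` in `ℂ[X₀, X₁, X₂]` has complex dimension `4`; in
particular its complex codimension in that `10`-dimensional space is `6`. -/
theorem su3_involution_fixed_dim_on_cubics
    (g : Matrix (Fin 3) (Fin 3) ℂ) (hg : g ∈ Matrix.specialUnitaryGroup (Fin 3) ℂ)
    (hsq : ∃ c : ℂ, g ^ 2 = c • (1 : Matrix (Fin 3) (Fin 3) ℂ))
    (hns : ¬ ∃ c : ℂ, g = c • (1 : Matrix (Fin 3) (Fin 3) ℂ)) :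
    Module.finrank ℂ ↥(homogeneousSubmodule (Fin 3) ℂ 3 ⊓
        Module.End.eigenspace (polySubstAction g).toLinearMap 1) = 4 ∧
    Module.finrank ℂ ↥(homogeneousSubmodule (Fin 3) ℂ 3) -
      Module.finrank ℂ ↥(homogeneousSubmodule (Fin 3) ℂ 3 ⊓
        Module.End.eigenspace (polySubstAction g).toLinearMap 1) = 6 := by
  obtain ⟨c, hc⟩ := hsq
  obtain ⟨hc3, ε, U, V, h1, hne, hUV, hVU, h⟩ := exists_diagonalization g hg c hc hns
  have hfix : Module.finrank ℂ ↥(homogeneousSubmodule (Fin 3) ℂ 3 ⊓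
      Module.End.eigenspace (polySubstAction g).toLinearMap 1) = 4 :=
    (finrank_fixedCubics_conj hUV hVU h).trans (finrank_fixedCubics_signs c hc3 ε h1 hne)
  rw [hfix, finrank_cubics]
  exact ⟨rfl, rfl⟩
end

section
/- Let ζ ∈ ℂ with ζ⁴ = −1 and let g be the linear automorphism ζ·diag(−1, 1, 1, 1) of ℂ⁴. Then the map g ⊗ ⋀²g on ℂ⁴ ⊗ ⋀²ℂ⁴ has no nonzero fixed vector. -/
theorem extPowMap_ιMulti {R M : Type*} [CommRing R] [AddCommGroup M] [Module R M]
    (d : ℕ) (f : M →ₗ[R] M) (m : Fin d → M) :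
    extPowMap d f (exteriorPower.ιMulti R d m) = exteriorPower.ιMulti R d (f ∘ m) :=
  Subtype.ext (ExteriorAlgebra.map_apply_ιMulti f m)

theorem negFirst_negFirst {F : Type*} [Field F] (n k : ℕ) (v : Fin n → F) :
    negFirst F n k (negFirst F n k v) = v := by
  ext i
  by_cases h : (i : ℕ) < k <;> simp [negFirst, h]

theorem extPowMap_comp_self_of_comp_self {R M : Type*} [CommRing R] [AddCommGroup M] [Module R M]
    (d : ℕ) (f : M →ₗ[R] M) (c : R) (hf : ∀ v, f (f v) = c • v) :
    extPowMap d f ∘ₗ extPowMap d f = c ^ d • LinearMap.id := by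
  apply exteriorPower.linearMap_ext
  ext1 m
  have h : (f ∘ f ∘ m) = fun i => c • m i := funext fun i => hf (m i)
  simp only [LinearMap.compAlternatingMap_apply, LinearMap.comp_apply, extPowMap_ιMulti, h,
    LinearMap.smul_apply, LinearMap.id_apply]
  simpa using (exteriorPower.ιMulti R d).map_smul_univ (fun _ => c) m

/-- Stated over an `AddCommMonoid`, because that is the structure a tensor product carries by
default. -/
theorem eq_zero_of_eq_smul {K V : Type*} [Field K] [AddCommMonoid V] [Module K V] {c : K}
    (hc : c ≠ 1) {x : V} (hx : x = c • x) : x = 0 := by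
  have h0 : (1 - c) • x = 0 := by
    calc (1 - c) • x = (-c) • x + x := by
          rw [sub_eq_neg_add, add_smul, one_smul]
      _ = (-c) • x + c • x := by rw [← hx]
      _ = 0 := by rw [← add_smul, neg_add_cancel, zero_smul]
  rw [← inv_smul_smul₀ (sub_ne_zero.mpr hc.symm) x, h0, smul_zero]

set_option synthInstance.maxHeartbeats 1000000 in
set_option maxHeartbeats 1000000 in
/-- For `ζ⁴ = −1` and `g = ζ·diag(−1,1,1,1)` on `ℂ⁴`, the map `g ⊗ ⋀²g` on
`ℂ⁴ ⊗ ⋀²ℂ⁴` has no nonzero fixed vector. -/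
theorem no_fixed_vector_tensor_ext2_C4 (ζ : ℂ) (hζ : ζ ^ 4 = -1) :
    ∀ x : TensorProduct ℂ (Fin 4 → ℂ) ↥(⋀[ℂ]^2 (Fin 4 → ℂ)),
      TensorProduct.map (ζ • negFirst ℂ 4 1) (extPowMap 2 (ζ • negFirst ℂ 4 1)) x = x →
        x = 0 := by
  intro x hx
  have hg : ∀ v, (ζ • negFirst ℂ 4 1) ((ζ • negFirst ℂ 4 1) v) = ζ ^ 2 • v := fun v => by
    simp only [LinearMap.smul_apply, map_smul, negFirst_negFirst, smul_smul, sq]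
  have hg' : (ζ • negFirst ℂ 4 1) ∘ₗ (ζ • negFirst ℂ 4 1) = ζ ^ 2 • LinearMap.id :=
    LinearMap.ext hg
  have hx2 : x = (ζ ^ 2 * (ζ ^ 2) ^ 2) • x := by
    conv_lhs => rw [← hx, ← hx, ← LinearMap.comp_apply, ← TensorProduct.map_comp, hg',
      extPowMap_comp_self_of_comp_self 2 _ _ hg, TensorProduct.map_smul_left,
      TensorProduct.map_smul_right, TensorProduct.map_id, smul_smul]
    rfl
  have hne : ζ ^ 2 * (ζ ^ 2) ^ 2 ≠ 1 := by
    intro h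
    have h2 : ζ ^ 2 = -1 := by linear_combination ζ ^ 2 * hζ - h
    have h3 : (1 : ℂ) = -1 := by linear_combination hζ - (ζ ^ 2 - 1) * h2
    norm_num at h3
  exact eq_zero_of_eq_smul hne hx2
end

section
/- Consider the following finite family of vectors in ℝ² with multiplicities: the vectors ±(0,1), ±(3,1), ±(3,2), ±(2,0), ±(2,2), ±(4,2) each with multiplicity 1; the vectors ±(1,0), ±(1,1), ±(2,1) each with multiplicity 2; and the zero vector (0,0) with multiplicity 3. Then for every nonzero linear functional φ : ℝ² → ℝ, the total multiplicity of the vectors w in the family satisfying φ(w) = 0 is at most 9. -/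
/-!
The weights lie on six lines through the origin: three carry the two opposite long roots `±β`,
and three carry six weights each, `±α` (twice) and `±2α` for a short root `α`. The kernel of a
nonzero functional is a line, so it contains the nonzero weights of at most one of the six, and
together with the triple zero weight this gives at most `6 + 3 = 9`.
-/

/-- The multiset of weights (with multiplicities), written in the basis of simple roots,
of the `27`-dimensional irreducible representation `S²₀ℝ⁷` of `G₂`. -/
def g2Weights : Multiset (ℝ × ℝ) :=
  ([(0, 1), (0, -1), (3, 1), (-3, -1), (3, 2), (-3, -2),
    (2, 0), (-2, 0), (2, 2), (-2, -2), (4, 2), (-4, -2),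
    (1, 0), (1, 0), (-1, 0), (-1, 0),
    (1, 1), (1, 1), (-1, -1), (-1, -1),
    (2, 1), (2, 1), (-2, -1), (-2, -1),
    (0, 0), (0, 0), (0, 0)] : List (ℝ × ℝ))

open Classical in
/-- Each Iverson bracket corresponds to one of the six lines carrying the nonzero weights,
where `a = φ (1, 0)` and `b = φ (0, 1)`. -/
theorem card_filter_g2Weights (φ : (ℝ × ℝ) →ₗ[ℝ] ℝ) (a b : ℝ)
    (h : ∀ x y : ℝ, φ (x, y) = x * a + y * b) :
    Multiset.card (g2Weights.filter fun w => φ w = 0) =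
      3 + 2 * (if b = 0 then 1 else 0) + 2 * (if 3 * a + b = 0 then 1 else 0)
        + 2 * (if 3 * a + 2 * b = 0 then 1 else 0) + 6 * (if a = 0 then 1 else 0)
        + 6 * (if a + b = 0 then 1 else 0) + 6 * (if 2 * a + b = 0 then 1 else 0) := by
  -- Every weight is a nonzero multiple of the representative of its line.
  have e2 : -3 * a + -1 * b = 0 ↔ 3 * a + b = 0 := by constructor <;> intro h <;> linarith
  have e3 : -3 * a + -2 * b = 0 ↔ 3 * a + 2 * b = 0 := by constructor <;> intro h <;> linarith
  have e4 : -2 * a + -2 * b = 0 ↔ a + b = 0 := by constructor <;> intro h <;> linarith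
  have e5 : 2 * a + 2 * b = 0 ↔ a + b = 0 := by constructor <;> intro h <;> linarith
  have e6 : 4 * a + 2 * b = 0 ↔ 2 * a + b = 0 := by constructor <;> intro h <;> linarith
  have e7 : -4 * a + -2 * b = 0 ↔ 2 * a + b = 0 := by constructor <;> intro h <;> linarith
  have e8 : -1 * a + -1 * b = 0 ↔ a + b = 0 := by constructor <;> intro h <;> linarith
  have e9 : -2 * a + -1 * b = 0 ↔ 2 * a + b = 0 := by constructor <;> intro h <;> linarith
  have e10 : 2 * a = 0 ↔ a = 0 := by constructor <;> intro h <;> linarith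
  have e11 : -2 * a = 0 ↔ a = 0 := by constructor <;> intro h <;> linarith
  have e12 : -1 * a = 0 ↔ a = 0 := by constructor <;> intro h <;> linarith
  have e13 : -1 * b = 0 ↔ b = 0 := by constructor <;> intro h <;> linarith
  rw [← Multiset.countP_eq_card_filter, g2Weights, Multiset.coe_countP]
  simp only [List.countP_cons, List.countP_nil, h, zero_mul, one_mul, zero_add, add_zero,
    e2, e3, e4, e5, e6, e7, e8, e9, e10, e11, e12, e13, decide_eq_true_eq, if_true]
  ring

open Classical in
/-- For every nonzero linear functional `φ` on `ℝ²`, the total multiplicity of the weights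
`w` of `(G₂, S²₀ℝ⁷)` with `φ(w) = 0` is at most `9`. -/
theorem g2_weights_on_kernel_le_nine (φ : (ℝ × ℝ) →ₗ[ℝ] ℝ) (hφ : φ ≠ 0) :
    Multiset.card (g2Weights.filter fun w => φ w = 0) ≤ 9 := by
  have h : ∀ x y : ℝ, φ (x, y) = x * φ (1, 0) + y * φ (0, 1) := by
    intro x y
    have hxy : ((x, y) : ℝ × ℝ) = x • (1, 0) + y • (0, 1) := by simp
    rw [hxy, map_add, map_smul, map_smul, smul_eq_mul, smul_eq_mul]
  rw [card_filter_g2Weights φ _ _ h]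
  have hab : ¬ (φ (1, 0) = 0 ∧ φ (0, 1) = 0) := by
    rintro ⟨ha, hb⟩
    apply hφ
    ext <;> simp [ha, hb]
  generalize φ (1, 0) = a at hab ⊢
  generalize φ (0, 1) = b at hab ⊢
  -- Two distinct conditions that hold simultaneously force `a = b = 0`.
  split_ifs <;> first
    | omega
    | exact absurd ⟨by linarith, by linarith⟩ hab
end
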